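/- Let μ be a T-invariant Borel probability measure on Ω satisfying the variance inequality: there is C > 0 such that for every n ≥ 1 and every separately d_θ-Lipschitz K : Ω^n → ℝ, ∫ (K(x,Tx,…,T^{n−1}x) − ∫ K(y,Ty,…,T^{n−1}y) dμ(y))² dμ(x) ≤ C Σ_{i=0}^{n−1} Lip_{θ,i}(K)². Let f : Ω → ℝ be d_θ-Lipschitz with ∫ f dμ = 0; suppose the series σ²(f) := ∫ f² dμ + 2 Σ_{ℓ≥1} ∫ f·(f∘T^ℓ) dμ converges with σ²(f) > 0, and suppose that S_n f/√n (with S_nf = Σ_{i=0}^{n−1} f∘T^i) converges in law under μ to the centered Gaussian law G_{0,σ²(f)} with variance σ²(f). Then for μ-almost every x ∈ Ω, W₁(𝒜_N(x), G_{0,σ²(f)}) → 0 as N → ∞, where 𝒜_N(x) = (1/L_N) Σ_{n=1}^{N} (1/n) δ_{S_nf(x)/√n}, L_N = Σ_{n=1}^{N} 1/n, and W₁ denotes the Wasserstein-1 distance between Borel probability measures on ℝ (with cost |u−v|). -/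

import Mathlib

open MeasureTheory Filter Topology
open scoped ENNReal NNReal BigOperators

noncomputable section

/-- The shift map on `Ω = Aℕ`. -/
def shift {A : Type*} (x : ℕ → A) : ℕ → A := fun k => x (k + 1)

/-- Prepend a symbol `a` to `x`. -/
def cons {A : Type*} (a : A) (x : ℕ → A) : ℕ → A := fun k =>
  match k with
  | 0 => a
  | k + 1 => x k

/-- Prepend a word `a ∈ Aⁿ` to `x`. -/
def wcat {A : Type*} {n : ℕ} (a : Fin n → A) (x : ℕ → A) : ℕ → A := fun k =>
  if h : k < n then a ⟨k, h⟩ else x (k - n)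

/-- The metric `d_θ(x,y) = θ^(first disagreement)`. -/
def dtheta {A : Type*} (θ : ℝ) (x y : ℕ → A) : ℝ :=
  letI := Classical.dec (x = y)
  if x = y then 0 else θ ^ sInf {k | x k ≠ y k}

/-- `K : Ωⁿ → ℝ` is separately `d_θ`-Lipschitz with constants `ℓ i`. -/
def SepLip {A : Type*} (θ : ℝ) {n : ℕ} (K : (Fin n → (ℕ → A)) → ℝ) (ℓ : Fin n → ℝ) : Prop :=
  ∀ (x : Fin n → (ℕ → A)) (i : Fin n) (x' : ℕ → A),
    |K x - K (Function.update x i x')| ≤ ℓ i * dtheta θ (x i) x'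

/-- Gaussian concentration bound with constant `C`. -/
def GCB {A : Type*} [MeasurableSpace A] (θ C : ℝ) (μ : Measure (ℕ → A)) : Prop :=
  ∀ (n : ℕ), 1 ≤ n → ∀ (K : (Fin n → (ℕ → A)) → ℝ) (ℓ : Fin n → ℝ), SepLip θ K ℓ →
    ∫ x, Real.exp (K (fun i => shift^[(i : ℕ)] x)) ∂μ ≤
      Real.exp (∫ y, K (fun i => shift^[(i : ℕ)] y) ∂μ) * Real.exp (C * ∑ j, ℓ j ^ 2)

/-- Birkhoff sum `S_n f`. -/
def birk {A : Type*} (f : (ℕ → A) → ℝ) (n : ℕ) (x : ℕ → A) : ℝ :=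
  ∑ i ∈ Finset.range n, f (shift^[i] x)

/-- Variation `var_n(φ)` (as an extended real). -/
def evar {A : Type*} (φ : (ℕ → A) → ℝ) (n : ℕ) : ℝ≥0∞ :=
  ⨆ (x : ℕ → A) (y : ℕ → A) (_ : ∀ i < n, x i = y i), ENNReal.ofReal |φ x - φ y|

/-- `W(φ,x,y)` (as an extended real). -/
def Wpair {A : Type*} (φ : (ℕ → A) → ℝ) (x y : ℕ → A) : ℝ≥0∞ :=
  ⨆ (n : ℕ) (a : Fin n → A), ENNReal.ofReal |birk φ n (wcat a x) - birk φ n (wcat a y)|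

/-- `W_p(φ)` (as an extended real). -/
def Wp {A : Type*} (φ : (ℕ → A) → ℝ) (p : ℕ) : ℝ≥0∞ :=
  ⨆ (x : ℕ → A) (y : ℕ → A) (_ : ∀ i < p, x i = y i), Wpair φ x y

/-- Walters' condition. -/
def Walters {A : Type*} (φ : (ℕ → A) → ℝ) : Prop :=
  (⨆ (x : ℕ → A) (y : ℕ → A), Wpair φ x y) ≠ ⊤ ∧ (∀ p, 0 < Wp φ p) ∧
    Antitone (Wp φ) ∧ Tendsto (Wp φ) atTop (𝓝 0)

/-- Ruelle's transfer operator `P_φ`. -/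
def transfer {A : Type*} [Fintype A] (φ f : (ℕ → A) → ℝ) (x : ℕ → A) : ℝ :=
  ∑ a : A, Real.exp (φ (cons a x)) * f (cons a x)
/-- Wasserstein-1 distance between Borel probability measures on ℝ (cost `|u - v|`). -/
def W1 (ν ν' : Measure ℝ) : ℝ :=
  sInf {r : ℝ | ∃ π : Measure (ℝ × ℝ), IsProbabilityMeasure π ∧
    π.map Prod.fst = ν ∧ π.map Prod.snd = ν' ∧ r = ∫ z, |z.1 - z.2| ∂π}

/-- The random measure `𝒜_N(x) = (1/L_N) Σ_{n=1}^N (1/n) δ_{S_n f(x)/√n}`. -/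
def ANmeas {A : Type*} (f : (ℕ → A) → ℝ) (x : ℕ → A) (N : ℕ) : Measure ℝ :=
  (ENNReal.ofReal (∑ n ∈ Finset.Icc 1 N, (1 : ℝ) / n))⁻¹ •
    ∑ n ∈ Finset.Icc 1 N,
      (ENNReal.ofReal ((1 : ℝ) / n)) • Measure.dirac (birk f n x / Real.sqrt n)

/-!
Changing the `i`-th point of an orbit moves the logarithmic average of `g (S_n f / √n)`, `g`
Lipschitz, by at most a multiple of `1 / (L_N √(i + 1))`, so the variance inequality bounds the
variance of this average by a multiple of `1 / L_N`. That is summable along `N = 2 ^ k ^ 2`, which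
gives almost sure convergence along this subsequence; since the partial sums are monotone in `N`
and `L_N` has ratio tending to `1` along it, the full sequence converges. This applies to the
potentials `g = |· - q|` with `q` rational, whose means converge because the variance inequality
makes `S_n f / √n` bounded in `L²`. By convexity, potentials control distribution functions, so the
quantile functions of the empirical measures converge almost everywhere; with `q = 0` their
`L¹` norms converge too, and Scheffé's lemma turns this into convergence of the quantile
couplings, hence of `W₁`.
-/

/-- The logarithmic average `(1 / L_N) ∑_{n=1}^N a n / n`, where `L_N = harmonic N`. -/
def logAverage (a : ℕ → ℝ) (N : ℕ) : ℝ :=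
  (∑ n ∈ Finset.Icc 1 N, a n / n) / (harmonic N : ℝ)

lemma cast_harmonic_pos {N : ℕ} (hN : N ≠ 0) : 0 < (harmonic N : ℝ) := by
  exact_mod_cast harmonic_pos hN

lemma cast_harmonic_eq_sum_Icc (N : ℕ) :
    (harmonic N : ℝ) = ∑ n ∈ Finset.Icc 1 N, (n : ℝ)⁻¹ := by
  simp [harmonic_eq_sum_Icc]

lemma monotone_cast_harmonic : Monotone fun N ↦ (harmonic N : ℝ) := fun M N h ↦ by
  simp only [cast_harmonic_eq_sum_Icc]
  exact Finset.sum_le_sum_of_subset_of_nonneg (Finset.Icc_subset_Icc_right h)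
    fun _ _ _ ↦ by positivity

lemma tendsto_cast_harmonic_atTop : Tendsto (fun N ↦ (harmonic N : ℝ)) atTop atTop :=
  tendsto_atTop_mono log_add_one_le_harmonic <|
    Real.tendsto_log_atTop.comp (tendsto_natCast_atTop_atTop.comp (tendsto_add_atTop_nat 1))

lemma tendsto_sum_mul_div_sum {w a : ℕ → ℝ} {m : ℝ} (hw : ∀ n, 0 ≤ w n)
    (hsum : Tendsto (fun N ↦ ∑ n ∈ Finset.range N, w n) atTop atTop)
    (ha : Tendsto a atTop (𝓝 m)) :
    Tendsto (fun N ↦ (∑ n ∈ Finset.range N, w n * a n) / ∑ n ∈ Finset.range N, w n)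
      atTop (𝓝 m) := by
  have hterm : (fun n ↦ w n * (a n - m)) =o[atTop] w := by
    have hsub : (fun n ↦ a n - m) =o[atTop] fun _ ↦ (1 : ℝ) :=
      (Asymptotics.isLittleO_one_iff ℝ).2 (by simpa using ha.sub_const m)
    simpa using (Asymptotics.isBigO_refl w atTop).mul_isLittleO hsub
  have hdiv := ((hterm.sum_range hw hsum).tendsto_div_nhds_zero).add_const m
  rw [zero_add] at hdiv
  refine hdiv.congr' ?_
  filter_upwards [hsum.eventually_gt_atTop 0] with N hN
  simp only [mul_sub, Finset.sum_sub_distrib, ← Finset.sum_mul]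
  field_simp
  ring

lemma sum_Icc_one_eq_sum_range {M : Type*} [AddCommMonoid M] (a : ℕ → M) (N : ℕ) :
    ∑ n ∈ Finset.Icc 1 N, a n = ∑ n ∈ Finset.range N, a (n + 1) := by
  rw [Finset.range_eq_Ico, Finset.sum_Ico_add' a 0 N 1]
  rfl

lemma tendsto_logAverage {a : ℕ → ℝ} {m : ℝ} (ha : Tendsto a atTop (𝓝 m)) :
    Tendsto (logAverage a) atTop (𝓝 m) := by
  have hw : ∀ N, (harmonic N : ℝ) = ∑ n ∈ Finset.range N, ((n + 1 : ℕ) : ℝ)⁻¹ := fun N ↦ by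
    rw [cast_harmonic_eq_sum_Icc, sum_Icc_one_eq_sum_range]
  refine (tendsto_sum_mul_div_sum (fun n ↦ inv_nonneg.2 (Nat.cast_nonneg (n + 1))) ?_
    ((tendsto_add_atTop_iff_nat 1).2 ha)).congr fun N ↦ ?_
  · simpa only [hw] using tendsto_cast_harmonic_atTop
  · simp only [logAverage, hw, sum_Icc_one_eq_sum_range, div_eq_inv_mul]

lemma sq_mul_log_two_le_harmonic (k : ℕ) :
    (k : ℝ) ^ 2 * Real.log 2 ≤ harmonic (2 ^ k ^ 2) := by
  refine le_trans ?_ (log_add_one_le_harmonic _)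
  calc (k : ℝ) ^ 2 * Real.log 2 = Real.log ((2 : ℝ) ^ k ^ 2) := by
        rw [Real.log_pow, Nat.cast_pow]
    _ ≤ Real.log ((2 ^ k ^ 2 + 1 : ℕ) : ℝ) := by
        apply Real.log_le_log (by positivity)
        push_cast
        linarith

lemma harmonic_le_one_add_sq_mul_log_two (k : ℕ) :
    (harmonic (2 ^ k ^ 2) : ℝ) ≤ 1 + (k : ℝ) ^ 2 * Real.log 2 := by
  refine (harmonic_le_one_add_log _).trans_eq ?_
  rw [Nat.cast_pow, Real.log_pow, Nat.cast_pow, Nat.cast_ofNat]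

lemma tendsto_harmonic_two_pow_sq_ratio :
    Tendsto (fun k : ℕ ↦ (harmonic (2 ^ (k + 1) ^ 2) : ℝ) / harmonic (2 ^ k ^ 2))
      atTop (𝓝 1) := by
  have : 0 < Real.log 2 := Real.log_pos one_lt_two
  have hinv : Tendsto (fun k : ℕ ↦ (k : ℝ)⁻¹) atTop (𝓝 0) := tendsto_inv_atTop_nhds_zero_nat
  have hupper : Tendsto (fun k : ℕ ↦ (k : ℝ)⁻¹ ^ 2 / Real.log 2 + (1 + (k : ℝ)⁻¹) ^ 2)
      atTop (𝓝 1) := by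
    simpa using ((hinv.pow 2).div_const (Real.log 2)).add ((hinv.const_add 1).pow 2)
  refine tendsto_of_tendsto_of_tendsto_of_le_of_le' tendsto_const_nhds hupper ?_ ?_
  · filter_upwards with k
    rw [one_le_div (cast_harmonic_pos (by positivity))]
    apply monotone_cast_harmonic
    gcongr <;> omega
  · filter_upwards [eventually_gt_atTop 0] with k hk
    calc (harmonic (2 ^ (k + 1) ^ 2) : ℝ) / harmonic (2 ^ k ^ 2)
        ≤ (1 + ((k + 1 : ℕ) : ℝ) ^ 2 * Real.log 2) / ((k : ℝ) ^ 2 * Real.log 2) :=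
          div_le_div₀ (by positivity) (harmonic_le_one_add_sq_mul_log_two _) (by positivity)
            (sq_mul_log_two_le_harmonic k)
      _ = (k : ℝ)⁻¹ ^ 2 / Real.log 2 + (1 + (k : ℝ)⁻¹) ^ 2 := by
          push_cast
          field_simp

lemma tendsto_div_of_tendsto_subseq_div {u h : ℕ → ℝ} {c κ : ℕ → ℕ} {m : ℝ}
    (hu : Monotone u) (hu0 : ∀ n, 0 ≤ u n) (hh : Monotone h) (hh0 : ∀ᶠ n in atTop, 0 < h n)
    (hc : Tendsto c atTop atTop) (hκ : Tendsto κ atTop atTop)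
    (hlower : ∀ᶠ N in atTop, c (κ N) ≤ N) (hupper : ∀ᶠ N in atTop, N ≤ c (κ N + 1))
    (hratio : Tendsto (fun k ↦ h (c (k + 1)) / h (c k)) atTop (𝓝 1))
    (hlim : Tendsto (fun k ↦ u (c k) / h (c k)) atTop (𝓝 m)) :
    Tendsto (fun N ↦ u N / h N) atTop (𝓝 m) := by
  have hpos : ∀ᶠ k in atTop, 0 < h (c k) := hc.eventually hh0
  have hleft : Tendsto (fun k ↦ u (c k) / h (c (k + 1))) atTop (𝓝 m) := by
    rw [← div_one m]
    refine (hlim.div hratio one_ne_zero).congr' ?_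
    filter_upwards [hpos] with k hk
    exact div_div_div_cancel_right₀ hk.ne' _ _
  have hright : Tendsto (fun k ↦ u (c (k + 1)) / h (c k)) atTop (𝓝 m) := by
    rw [← mul_one m]
    refine ((hlim.comp (tendsto_add_atTop_nat 1)).mul hratio).congr' ?_
    filter_upwards [(tendsto_add_atTop_nat 1).eventually hpos] with k hk
    exact div_mul_div_cancel₀ hk.ne'
  refine tendsto_of_tendsto_of_tendsto_of_le_of_le' (hleft.comp hκ) (hright.comp hκ) ?_ ?_
  · filter_upwards [hlower, hupper, hh0] with N hN₁ hN₂ hN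
    exact div_le_div₀ (hu0 _) (hu hN₁) hN (hh hN₂)
  · filter_upwards [hlower, hupper, hκ.eventually hpos] with N hN₁ hN₂ hN
    exact div_le_div₀ (hu0 _) (hu hN₂) hN (hh hN₁)

lemma tendsto_two_pow_sq_atTop : Tendsto (fun k : ℕ ↦ 2 ^ k ^ 2) atTop atTop :=
  tendsto_atTop_mono (fun k ↦ (Nat.le_self_pow two_ne_zero k).trans Nat.lt_two_pow_self.le)
    tendsto_id

lemma two_pow_sqrt_log_sq_le {N : ℕ} (hN : N ≠ 0) : 2 ^ (Nat.log 2 N).sqrt ^ 2 ≤ N :=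
  (Nat.pow_le_pow_right two_pos (Nat.sqrt_le' _)).trans (Nat.pow_log_le_self 2 hN)

lemma lt_two_pow_succ_sqrt_log_sq (N : ℕ) : N < 2 ^ ((Nat.log 2 N).sqrt + 1) ^ 2 :=
  (Nat.lt_pow_succ_log_self one_lt_two N).trans_le
    (Nat.pow_le_pow_right two_pos (Nat.lt_succ_sqrt' _))

lemma tendsto_logAverage_of_two_pow_sq {a : ℕ → ℝ} {m : ℝ} (ha : ∀ n, 0 ≤ a n)
    (h : Tendsto (fun k ↦ logAverage a (2 ^ k ^ 2)) atTop (𝓝 m)) :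
    Tendsto (logAverage a) atTop (𝓝 m) := by
  have hterm : ∀ n, 0 ≤ a n / n := fun n ↦ div_nonneg (ha n) n.cast_nonneg
  have hindex : Tendsto (fun N ↦ (Nat.log 2 N).sqrt) atTop atTop := by
    refine tendsto_atTop.2 fun b ↦ ?_
    filter_upwards [eventually_ge_atTop (2 ^ b ^ 2)] with N hN
    exact Nat.le_sqrt'.2 (Nat.le_log_of_pow_le one_lt_two hN)
  refine tendsto_div_of_tendsto_subseq_div (h := fun N ↦ (harmonic N : ℝ))
    (fun M N hMN ↦ Finset.sum_le_sum_of_subset_of_nonneg (Finset.Icc_subset_Icc_right hMN)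
      fun n _ _ ↦ hterm n)
    (fun N ↦ Finset.sum_nonneg fun n _ ↦ hterm n) monotone_cast_harmonic
    (tendsto_cast_harmonic_atTop.eventually_gt_atTop 0) tendsto_two_pow_sq_atTop hindex
    ?_ ?_ tendsto_harmonic_two_pow_sq_ratio h
  · filter_upwards [eventually_ne_atTop 0] with N hN using two_pow_sqrt_log_sq_le hN
  · exact Eventually.of_forall fun N ↦ (lt_two_pow_succ_sqrt_log_sq N).le

lemma inv_sqrt_div_self_le {n : ℕ} (hn : 0 < n) :
    (√n)⁻¹ / n ≤ 4 * ((√n)⁻¹ - (√(n + 1 : ℕ))⁻¹) := by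
  set s := √(n : ℝ)
  set t := √((n + 1 : ℕ) : ℝ)
  have hs : 0 < s := by positivity
  have ht : 0 < t := by positivity
  have hs_sq : s ^ 2 = n := Real.sq_sqrt (by positivity)
  have ht_sq : t ^ 2 = s ^ 2 + 1 := by
    rw [hs_sq, ← Nat.cast_add_one]
    exact Real.sq_sqrt (by positivity)
  have hdiff : s⁻¹ - t⁻¹ = (t * (s + t) * s)⁻¹ := by
    field_simp
    linear_combination ht_sq
  have hprod : t * (s + t) ≤ 4 * s ^ 2 := by
    have : (1 : ℝ) ≤ s ^ 2 := by rw [hs_sq]; exact_mod_cast hn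
    nlinarith [sq_nonneg (t - s)]
  calc s⁻¹ / n = 4 * (4 * s ^ 2 * s)⁻¹ := by rw [← hs_sq]; field_simp
    _ ≤ 4 * (t * (s + t) * s)⁻¹ := by gcongr
    _ = 4 * (s⁻¹ - t⁻¹) := by rw [hdiff]

lemma sum_Ico_inv_sqrt_div_le {i N : ℕ} (h : i ≤ N) :
    ∑ n ∈ Finset.Ico (i + 1) (N + 1), (√n)⁻¹ / n ≤ 4 * (√(i + 1 : ℕ))⁻¹ := by
  have htelescope := Finset.sum_Ico_sub (fun n : ℕ ↦ -(√n)⁻¹) (Nat.succ_le_succ h)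
  simp only [neg_sub_neg] at htelescope
  calc ∑ n ∈ Finset.Ico (i + 1) (N + 1), (√n)⁻¹ / n
      ≤ ∑ n ∈ Finset.Ico (i + 1) (N + 1), 4 * ((√n)⁻¹ - (√(n + 1 : ℕ))⁻¹) :=
        Finset.sum_le_sum fun n hn ↦
          inv_sqrt_div_self_le (i.succ_pos.trans_le (Finset.mem_Ico.1 hn).1)
    _ = 4 * ((√(i + 1 : ℕ))⁻¹ - (√(N + 1 : ℕ))⁻¹) := by rw [← Finset.mul_sum, htelescope]
    _ ≤ 4 * (√(i + 1 : ℕ))⁻¹ := by gcongr; exact sub_le_self _ (by positivity)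

section Variance

open ProbabilityTheory

variable {Ω : Type*} [MeasurableSpace Ω] {μ : Measure Ω}

lemma ae_tendsto_sub_integral_of_summable_variance [IsFiniteMeasure μ] {Z : ℕ → Ω → ℝ}
    (hZ : ∀ k, MemLp (Z k) 2 μ) (hsum : Summable fun k ↦ Var[Z k; μ]) :
    ∀ᵐ x ∂μ, Tendsto (fun k ↦ Z k x - μ[Z k]) atTop (𝓝 0) := by
  have hmeas : ∀ k, AEStronglyMeasurable (fun x ↦ (Z k x - μ[Z k]) ^ 2) μ := fun k ↦
    ((hZ k).aestronglyMeasurable.sub aestronglyMeasurable_const).pow 2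
  have hnorm : ∀ k, eLpNorm (fun x ↦ (Z k x - μ[Z k]) ^ 2) 1 μ = ENNReal.ofReal Var[Z k; μ] :=
    fun k ↦ by
      simp only [ofReal_variance (hZ k), evariance, eLpNorm_one_eq_lintegral_enorm, enorm_pow]
  have hsq := summable_norm_of_tsum_eLpNorm_ne_top le_rfl hmeas
    (by simpa only [hnorm] using hsum.tsum_ofReal_ne_top)
  filter_upwards [hsq] with x hx
  have hsqrt := hx.tendsto_atTop_zero.sqrt
  simp only [norm_pow, Real.sqrt_sq (norm_nonneg _), Real.sqrt_zero] at hsqrt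
  exact tendsto_zero_iff_norm_tendsto_zero.2 hsqrt

lemma summable_inv_harmonic_two_pow_sq :
    Summable fun k : ℕ ↦ (harmonic (2 ^ k ^ 2) : ℝ)⁻¹ := by
  have : 0 < Real.log 2 := Real.log_pos one_lt_two
  refine .of_norm_bounded_eventually_nat
    ((Real.summable_nat_pow_inv.2 one_lt_two).mul_right (Real.log 2)⁻¹) ?_
  filter_upwards [eventually_gt_atTop 0] with k hk
  rw [norm_inv, Real.norm_of_nonneg (cast_harmonic_pos (by positivity)).le, ← mul_inv]
  gcongr
  exact sq_mul_log_two_le_harmonic k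

lemma memLp_logAverage {Y : ℕ → Ω → ℝ} {p : ℝ≥0∞} (hY : ∀ n, MemLp (Y n) p μ) (N : ℕ) :
    MemLp (fun x ↦ logAverage (Y · x) N) p μ := by
  simp only [logAverage, div_eq_inv_mul]
  exact (memLp_finsetSum _ fun n _ ↦ (hY n).const_mul _).const_mul _

lemma integral_logAverage {Y : ℕ → Ω → ℝ} (hY : ∀ n, Integrable (Y n) μ) (N : ℕ) :
    ∫ x, logAverage (Y · x) N ∂μ = logAverage (fun n ↦ ∫ x, Y n x ∂μ) N := by
  simp only [logAverage]
  rw [integral_div, integral_finsetSum _ fun n _ ↦ (hY n).div_const _]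
  simp only [integral_div]

lemma ae_tendsto_logAverage [IsFiniteMeasure μ] {Y : ℕ → Ω → ℝ} {K m : ℝ}
    (hY : ∀ n, MemLp (Y n) 2 μ) (hY_nonneg : ∀ n x, 0 ≤ Y n x)
    (hvar : ∀ N, 1 ≤ N → Var[fun x ↦ logAverage (Y · x) N; μ] ≤ K / harmonic N)
    (hmean : Tendsto (fun n ↦ ∫ x, Y n x ∂μ) atTop (𝓝 m)) :
    ∀ᵐ x ∂μ, Tendsto (logAverage (Y · x)) atTop (𝓝 m) := by
  have hsum : Summable fun k : ℕ ↦ Var[fun x ↦ logAverage (Y · x) (2 ^ k ^ 2); μ] :=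
    .of_nonneg_of_le (fun k ↦ variance_nonneg _ _) (fun k ↦ hvar _ Nat.one_le_two_pow)
      (summable_inv_harmonic_two_pow_sq.mul_left K)
  have hmean_subseq := (tendsto_logAverage hmean).comp tendsto_two_pow_sq_atTop
  filter_upwards [ae_tendsto_sub_integral_of_summable_variance
    (fun k ↦ memLp_logAverage hY (2 ^ k ^ 2)) hsum] with x hx
  refine tendsto_logAverage_of_two_pow_sq (fun n ↦ hY_nonneg n x) ?_
  simpa [integral_logAverage fun n ↦ (hY n).integrable one_le_two] using hx.add hmean_subseq

end Variance

section Truncation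

variable {Ω : Type*} [MeasurableSpace Ω] {μ : Measure Ω}

lemma tendsto_integral_min_atTop {Z : Ω → ℝ} (hZ : Integrable Z μ) (hZ_nonneg : ∀ x, 0 ≤ Z x) :
    Tendsto (fun M : ℝ ↦ ∫ x, min (Z x) M ∂μ) atTop (𝓝 (∫ x, Z x ∂μ)) := by
  refine tendsto_integral_filter_of_dominated_convergence Z ?_ ?_ hZ ?_
  · exact Eventually.of_forall fun M ↦ hZ.aestronglyMeasurable.inf aestronglyMeasurable_const
  · filter_upwards [eventually_ge_atTop 0] with M hM
    filter_upwards with x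
    rw [Real.norm_of_nonneg (le_min (hZ_nonneg x) hM)]
    exact min_le_left _ _
  · filter_upwards with x
    refine tendsto_const_nhds.congr' ?_
    filter_upwards [eventually_ge_atTop (Z x)] with M hM using (min_eq_left hM).symm

lemma abs_integral_sub_integral_min_le [IsFiniteMeasure μ] {Y : Ω → ℝ} {M : ℝ}
    (hY : MemLp Y 2 μ) (hM : 0 < M) :
    |∫ x, Y x ∂μ - ∫ x, min (Y x) M ∂μ| ≤ (∫ x, Y x ^ 2 ∂μ) / M := by
  have hint : Integrable Y μ := hY.integrable one_le_two
  have hint_min : Integrable (fun x ↦ min (Y x) M) μ := hint.inf (integrable_const M)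
  have hpointwise : ∀ x, Y x - min (Y x) M ≤ Y x ^ 2 / M := fun x ↦ by
    rw [le_div_iff₀ hM]
    rcases le_total (Y x) M with h | h
    · rw [min_eq_left h, sub_self, zero_mul]
      positivity
    · rw [min_eq_right h]
      nlinarith
  rw [← integral_sub hint hint_min, ← integral_div,
    abs_of_nonneg (integral_nonneg fun x ↦ sub_nonneg.2 (min_le_left _ _))]
  exact integral_mono (hint.sub hint_min) (hY.integrable_sq.div_const M) hpointwise

lemma integral_min_le_one_add_integral_sq [IsProbabilityMeasure μ] {Y : Ω → ℝ}
    (hY : MemLp Y 2 μ) (M : ℝ) :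
    ∫ x, min (Y x) M ∂μ ≤ 1 + ∫ x, Y x ^ 2 ∂μ := by
  have hint : Integrable Y μ := hY.integrable one_le_two
  calc ∫ x, min (Y x) M ∂μ
      ≤ ∫ x, (1 + Y x ^ 2) ∂μ := by
        refine integral_mono (hint.inf (integrable_const M))
          ((integrable_const 1).add hY.integrable_sq) fun x ↦ (min_le_left _ _).trans ?_
        change Y x ≤ 1 + Y x ^ 2
        nlinarith [sq_nonneg (Y x - 1)]
    _ = 1 + ∫ x, Y x ^ 2 ∂μ := by
        rw [integral_add (integrable_const 1) hY.integrable_sq]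
        simp

lemma integrable_of_forall_integral_min_le {G : Measure ℝ} [IsFiniteMeasure G] {Z : ℝ → ℝ}
    {B : ℝ} (hZ : AEStronglyMeasurable Z G) (hZ_nonneg : ∀ u, 0 ≤ Z u)
    (hB : ∀ M, 0 ≤ M → ∫ u, min (Z u) M ∂G ≤ B) : Integrable Z G := by
  have hmin_nonneg : ∀ (M : ℕ) u, 0 ≤ min (Z u) M := fun M u ↦
    le_min (hZ_nonneg u) M.cast_nonneg
  have hmin_meas : ∀ M : ℕ, AEStronglyMeasurable (fun u ↦ min (Z u) M) G := fun M ↦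
    hZ.inf aestronglyMeasurable_const
  have hlintegral : ∀ M : ℕ, ∫⁻ u, ‖min (Z u) M‖ₑ ∂G ≤ ENNReal.ofReal B := fun M ↦ by
    have hint : Integrable (fun u ↦ min (Z u) M) G :=
      .of_bound (hmin_meas M) M <| .of_forall fun u ↦ by
        rw [Real.norm_of_nonneg (hmin_nonneg M u)]
        exact min_le_right _ _
    simp only [Real.enorm_of_nonneg (hmin_nonneg M _)]
    rw [← ofReal_integral_eq_lintegral_ofReal hint (.of_forall (hmin_nonneg M))]
    exact ENNReal.ofReal_le_ofReal (hB M M.cast_nonneg)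
  refine integrable_of_tendsto (G := fun (M : ℕ) u ↦ min (Z u) M) (.of_forall fun u ↦ ?_)
    hmin_meas ?_
  · refine tendsto_const_nhds.congr' ?_
    filter_upwards [tendsto_natCast_atTop_atTop.eventually_ge_atTop (Z u)] with M hM
    exact (min_eq_left hM).symm
  · exact ne_top_of_le_ne_top ENNReal.ofReal_ne_top
      (liminf_le_of_le (by isBoundedDefault) fun b hb ↦ by
        obtain ⟨M, hM⟩ := hb.exists
        exact hM.trans (hlintegral M))

lemma tendsto_integral_of_tendsto_integral_min [IsFiniteMeasure μ] {ι Ω' : Type*}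
    [MeasurableSpace Ω'] {ν : Measure Ω'} {l : Filter ι} {Y : ι → Ω → ℝ} {Z : Ω' → ℝ} {W : ℝ}
    (hY : ∀ i, MemLp (Y i) 2 μ)
    (hW : ∀ᶠ i in l, ∫ x, Y i x ^ 2 ∂μ ≤ W)
    (hZ : Integrable Z ν) (hZ_nonneg : ∀ u, 0 ≤ Z u)
    (hlim : ∀ M, 0 ≤ M →
      Tendsto (fun i ↦ ∫ x, min (Y i x) M ∂μ) l (𝓝 (∫ u, min (Z u) M ∂ν))) :
    Tendsto (fun i ↦ ∫ x, Y i x ∂μ) l (𝓝 (∫ u, Z u ∂ν)) := by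
  have hunif : TendstoUniformlyOnFilter (fun (M : ℝ) i ↦ ∫ x, min (Y i x) M ∂μ)
      (fun i ↦ ∫ x, Y i x ∂μ) atTop l := by
    rw [Metric.tendstoUniformlyOnFilter_iff]
    intro ε hε
    have hsmall : ∀ᶠ M in atTop, W / M < ε :=
      (tendsto_const_nhds.div_atTop tendsto_id).eventually_lt_const hε
    filter_upwards [(hsmall.and (eventually_gt_atTop 0)).prod_mk hW] with ⟨M, i⟩ ⟨⟨hM, hM0⟩, hi⟩
    calc dist (∫ x, Y i x ∂μ) (∫ x, min (Y i x) M ∂μ)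
        ≤ (∫ x, Y i x ^ 2 ∂μ) / M := abs_integral_sub_integral_min_le (hY i) hM0
      _ ≤ W / M := by gcongr
      _ < ε := hM
  exact hunif.tendsto_of_eventually_tendsto ((eventually_ge_atTop 0).mono hlim)
    (tendsto_integral_min_atTop hZ hZ_nonneg)

end Truncation

section ConvergenceInLaw

open BoundedContinuousFunction

variable {Ω ι : Type*} [MeasurableSpace Ω] {μ : Measure Ω} {G : Measure ℝ}
  {l : Filter ι} {X : ι → Ω → ℝ} {g : ℝ → ℝ} {W : ℝ}

lemma tendsto_integral_min_comp
    (hlaw : ∀ φ : ℝ →ᵇ ℝ, Tendsto (fun i ↦ ∫ x, φ (X i x) ∂μ) l (𝓝 (∫ u, φ u ∂G)))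
    (hg : Continuous g) (hg_nonneg : ∀ u, 0 ≤ g u) {M : ℝ} (hM : 0 ≤ M) :
    Tendsto (fun i ↦ ∫ x, min (g (X i x)) M ∂μ) l (𝓝 (∫ u, min (g u) M ∂G)) :=
  hlaw <| .ofNormedAddCommGroup (fun u ↦ min (g u) M) (hg.min continuous_const) M fun u ↦ by
    rw [Real.norm_of_nonneg (le_min (hg_nonneg u) hM)]
    exact min_le_right _ _

lemma integrable_of_tendsto_integral_of_integral_sq_le [l.NeBot] [IsProbabilityMeasure μ]
    [IsFiniteMeasure G]
    (hlaw : ∀ φ : ℝ →ᵇ ℝ, Tendsto (fun i ↦ ∫ x, φ (X i x) ∂μ) l (𝓝 (∫ u, φ u ∂G)))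
    (hg : Continuous g) (hg_nonneg : ∀ u, 0 ≤ g u)
    (hX : ∀ i, MemLp (fun x ↦ g (X i x)) 2 μ)
    (hW : ∀ᶠ i in l, ∫ x, g (X i x) ^ 2 ∂μ ≤ W) : Integrable g G :=
  integrable_of_forall_integral_min_le (B := 1 + W) hg.aestronglyMeasurable hg_nonneg
    fun M hM ↦ le_of_tendsto (tendsto_integral_min_comp hlaw hg hg_nonneg hM) <|
      hW.mono fun i hi ↦ (integral_min_le_one_add_integral_sq (hX i) M).trans (by gcongr)

lemma tendsto_integral_comp_of_integral_sq_le [l.NeBot] [IsProbabilityMeasure μ]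
    [IsFiniteMeasure G]
    (hlaw : ∀ φ : ℝ →ᵇ ℝ, Tendsto (fun i ↦ ∫ x, φ (X i x) ∂μ) l (𝓝 (∫ u, φ u ∂G)))
    (hg : Continuous g) (hg_nonneg : ∀ u, 0 ≤ g u)
    (hX : ∀ i, MemLp (fun x ↦ g (X i x)) 2 μ)
    (hW : ∀ᶠ i in l, ∫ x, g (X i x) ^ 2 ∂μ ≤ W) :
    Tendsto (fun i ↦ ∫ x, g (X i x) ∂μ) l (𝓝 (∫ u, g u ∂G)) :=
  tendsto_integral_of_tendsto_integral_min hX hW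
    (integrable_of_tendsto_integral_of_integral_sq_le hlaw hg hg_nonneg hX hW) hg_nonneg
    fun _ hM ↦ tendsto_integral_min_comp hlaw hg hg_nonneg hM

-- The integral of a non-measurable function is `0`, whereas `∫ sigmoid ∂G` is positive.
lemma eventually_aemeasurable_of_tendsto_integral [IsProbabilityMeasure G]
    (hlaw : ∀ φ : ℝ →ᵇ ℝ, Tendsto (fun i ↦ ∫ x, φ (X i x) ∂μ) l (𝓝 (∫ u, φ u ∂G))) :
    ∀ᶠ i in l, AEMeasurable (X i) μ := by
  let φ : ℝ →ᵇ ℝ := .ofNormedAddCommGroup Real.sigmoid continuous_sigmoid 1 fun u ↦ by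
    rw [Real.norm_of_nonneg (Real.sigmoid_nonneg u)]
    exact Real.sigmoid_le_one u
  have hpos : 0 < ∫ u, φ u ∂G := by
    change 0 < ∫ u, Real.sigmoid u ∂G
    rw [integral_pos_iff_support_of_nonneg Real.sigmoid_nonneg (φ.integrable G),
      Function.support_eq_univ fun u ↦ (Real.sigmoid_pos u).ne']
    simp
  filter_upwards [(hlaw φ).eventually_const_lt hpos] with i hi
  have hint : Integrable (fun x ↦ φ (X i x)) μ := .of_integral_ne_zero hi.ne'
  exact (continuous_sigmoid.measurableEmbedding Real.sigmoid_injective).aemeasurable_comp_iff.1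
    hint.aestronglyMeasurable.aemeasurable

end ConvergenceInLaw

section Quantile

open ProbabilityTheory

/-- The quantile function (left-continuous generalized inverse of the distribution function) of a
probability measure on `ℝ`. Only its values on `(0, 1)` are meaningful. -/
def quantile (ν : Measure ℝ) (u : ℝ) : ℝ := sInf {x | u ≤ cdf ν x}

/-- The uniform probability measure on the open interval `(0, 1)`. -/
def uniform01 : Measure ℝ := volume.restrict (Set.Ioo 0 1)

instance : IsProbabilityMeasure uniform01 := ⟨by simp [uniform01]⟩

instance : NullSingletonClass uniform01 := by
  unfold uniform01
  infer_instance

variable {ν G : Measure ℝ} {u x : ℝ}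

lemma ae_mem_Ioo_uniform01 : ∀ᵐ u ∂uniform01, u ∈ Set.Ioo (0 : ℝ) 1 :=
  ae_restrict_mem measurableSet_Ioo

lemma exists_cdf_lt (ν : Measure ℝ) (hu : 0 < u) : ∃ x, cdf ν x < u :=
  ((tendsto_cdf_atBot ν).eventually_lt_const hu).exists

lemma exists_le_cdf (ν : Measure ℝ) (hu : u < 1) : ∃ x, u ≤ cdf ν x :=
  ((tendsto_cdf_atTop ν).eventually_const_le hu).exists

lemma quantile_le_iff (hu : u ∈ Set.Ioo (0 : ℝ) 1) : quantile ν u ≤ x ↔ u ≤ cdf ν x := by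
  have hbdd : BddBelow {y | u ≤ cdf ν y} := by
    obtain ⟨b, hb⟩ := exists_cdf_lt ν hu.1
    exact ⟨b, fun y hy ↦ ((monotone_cdf ν).reflect_lt (hb.trans_le hy)).le⟩
  refine ⟨fun h ↦ ?_, fun h ↦ csInf_le hbdd h⟩
  have hgt : ∀ y, x < y → u ≤ cdf ν y := fun y hy ↦ by
    obtain ⟨z, hz, hzy⟩ := exists_lt_of_csInf_lt (exists_le_cdf ν hu.2) (h.trans_lt hy)
    exact le_trans hz (monotone_cdf ν hzy.le)
  have hright : Tendsto (cdf ν) (𝓝[>] x) (𝓝 (cdf ν x)) :=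
    ((cdf ν).right_continuous x).mono_left (nhdsWithin_mono _ Set.Ioi_subset_Ici_self)
  exact ge_of_tendsto hright (eventually_nhdsWithin_of_forall hgt)

lemma lt_quantile_iff (hu : u ∈ Set.Ioo (0 : ℝ) 1) : x < quantile ν u ↔ cdf ν x < u := by
  rw [← not_le, quantile_le_iff hu, not_le]

lemma monotoneOn_quantile (ν : Measure ℝ) : MonotoneOn (quantile ν) (Set.Ioo 0 1) :=
  fun _ ha _ hb hab ↦ (quantile_le_iff ha).2 (hab.trans ((quantile_le_iff hb).1 le_rfl))

lemma aemeasurable_quantile (ν : Measure ℝ) : AEMeasurable (quantile ν) uniform01 :=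
  aemeasurable_restrict_of_monotoneOn measurableSet_Ioo (monotoneOn_quantile ν)

lemma uniform01_Iic {c : ℝ} (hc : c ≤ 1) : uniform01 (Set.Iic c) = ENNReal.ofReal c := by
  rw [uniform01, Measure.restrict_congr_set Ioo_ae_eq_Ioc, Measure.restrict_apply measurableSet_Iic,
    Set.inter_comm, Set.Ioc_inter_Iic, min_eq_right hc, Real.volume_Ioc, sub_zero]

lemma map_quantile (ν : Measure ℝ) [IsProbabilityMeasure ν] :
    uniform01.map (quantile ν) = ν := by
  have : IsProbabilityMeasure (uniform01.map (quantile ν)) :=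
    Measure.isProbabilityMeasure_map (aemeasurable_quantile ν)
  refine Measure.ext_of_Iic _ _ fun a ↦ ?_
  have hpreimage : quantile ν ⁻¹' Set.Iic a =ᵐ[uniform01] Set.Iic (cdf ν a) := by
    filter_upwards [ae_mem_Ioo_uniform01] with u hu using propext (quantile_le_iff hu)
  rw [Measure.map_apply_of_aemeasurable (aemeasurable_quantile ν) measurableSet_Iic,
    measure_congr hpreimage, uniform01_Iic (cdf_le_one ν a), ofReal_cdf]

lemma integrable_quantile [IsProbabilityMeasure ν] (hν : Integrable (fun u ↦ u) ν) :
    Integrable (quantile ν) uniform01 := by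
  rw [← map_quantile ν] at hν
  exact hν.comp_aemeasurable (aemeasurable_quantile ν)

lemma integral_comp_quantile [IsProbabilityMeasure ν] {g : ℝ → ℝ} (hg : Continuous g) :
    ∫ u, g (quantile ν u) ∂uniform01 = ∫ u, g u ∂ν := by
  rw [← integral_map (aemeasurable_quantile ν) hg.aestronglyMeasurable, map_quantile]

lemma ae_continuousWithinAt_quantile (G : Measure ℝ) :
    ∀ᵐ u ∂uniform01, ContinuousWithinAt (quantile G) (Set.Ioo 0 1) u := by
  have hnull := ((monotoneOn_quantile G).countable_not_continuousWithinAt).measure_zero uniform01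
  filter_upwards [measure_eq_zero_iff_ae_notMem.1 hnull, ae_mem_Ioo_uniform01] with u hu hmem
  by_contra h
  exact hu ⟨hmem, h⟩

end Quantile

section Wasserstein

lemma W1_nonneg (ν ν' : Measure ℝ) : 0 ≤ W1 ν ν' :=
  Real.sInf_nonneg <| by
    rintro r ⟨π, -, -, -, rfl⟩
    exact integral_nonneg fun _ ↦ abs_nonneg _

lemma W1_le_integral_of_coupling {Ω : Type*} [MeasurableSpace Ω] {P : Measure Ω}
    [IsProbabilityMeasure P] {X Y : Ω → ℝ} (hX : AEMeasurable X P) (hY : AEMeasurable Y P) :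
    W1 (P.map X) (P.map Y) ≤ ∫ ω, |X ω - Y ω| ∂P := by
  have hXY : AEMeasurable (fun ω ↦ (X ω, Y ω)) P := hX.prodMk hY
  refine csInf_le ⟨0, ?_⟩ ⟨P.map fun ω ↦ (X ω, Y ω), Measure.isProbabilityMeasure_map hXY,
    ?_, ?_, ?_⟩
  · rintro r ⟨π, -, -, -, rfl⟩
    exact integral_nonneg fun _ ↦ abs_nonneg _
  · exact AEMeasurable.map_map_of_aemeasurable measurable_fst.aemeasurable hXY
  · exact AEMeasurable.map_map_of_aemeasurable measurable_snd.aemeasurable hXY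
  · exact (integral_map hXY (continuous_fst.sub continuous_snd).abs.aestronglyMeasurable).symm

lemma W1_le_integral_quantile (ν ν' : Measure ℝ) [IsProbabilityMeasure ν]
    [IsProbabilityMeasure ν'] :
    W1 ν ν' ≤ ∫ u, |quantile ν u - quantile ν' u| ∂uniform01 := by
  simpa only [map_quantile] using
    W1_le_integral_of_coupling (aemeasurable_quantile ν) (aemeasurable_quantile ν')

-- Scheffé's lemma: `|X N| + |Y| - |X N - Y|` lies between `0` and `2 |Y|`.
lemma tendsto_integral_abs_sub_of_tendsto_integral_abs {Ω : Type*} [MeasurableSpace Ω]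
    {P : Measure Ω} {X : ℕ → Ω → ℝ} {Y : Ω → ℝ} (hX : ∀ N, Integrable (X N) P)
    (hY : Integrable Y P) (hae : ∀ᵐ ω ∂P, Tendsto (fun N ↦ X N ω) atTop (𝓝 (Y ω)))
    (habs : Tendsto (fun N ↦ ∫ ω, |X N ω| ∂P) atTop (𝓝 (∫ ω, |Y ω| ∂P))) :
    Tendsto (fun N ↦ ∫ ω, |X N ω - Y ω| ∂P) atTop (𝓝 0) := by
  have hdefect : Tendsto (fun N ↦ ∫ ω, (|X N ω| + |Y ω| - |X N ω - Y ω|) ∂P) atTop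
      (𝓝 (∫ ω, 2 * |Y ω| ∂P)) := by
    refine tendsto_integral_of_dominated_convergence (fun ω ↦ 2 * |Y ω|)
      (fun N ↦ (((hX N).abs.add hY.abs).sub ((hX N).sub hY).abs).aestronglyMeasurable)
      (hY.abs.const_mul 2) (fun N ↦ .of_forall fun ω ↦ ?_) ?_
    · rw [Real.norm_of_nonneg (sub_nonneg.2 (abs_sub _ _))]
      linarith [abs_sub_abs_le_abs_sub (X N ω) (Y ω)]
    · filter_upwards [hae] with ω hω
      simpa [two_mul] using (hω.abs.add_const |Y ω|).sub (hω.sub_const (Y ω)).abs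
  have hsplit : ∀ N, ∫ ω, (|X N ω| + |Y ω| - |X N ω - Y ω|) ∂P =
      ∫ ω, |X N ω| ∂P + ∫ ω, |Y ω| ∂P - ∫ ω, |X N ω - Y ω| ∂P := fun N ↦
    (integral_sub ((hX N).abs.add hY.abs) ((hX N).sub hY).abs).trans
      (congrArg (· - _) (integral_add (hX N).abs hY.abs))
  rw [integral_const_mul] at hdefect
  simpa [hsplit, two_mul] using (habs.add_const (∫ ω, |Y ω| ∂P)).sub hdefect

end Wasserstein

section Ramp

open ProbabilityTheory

variable {ν G : Measure ℝ} {q r : ℝ}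

/-- The function equal to `1` on `(-∞, q]`, to `0` on `[r, ∞)` and affine on `[q, r]`, written as a
combination of the functions `u ↦ |u - q|` and `u ↦ |u - r|`. -/
def ramp (q r u : ℝ) : ℝ := ((|u - r| - |u - q|) / (r - q) + 1) / 2

lemma indicator_Iic_le_ramp (hqr : q < r) (u : ℝ) : (Set.Iic q).indicator 1 u ≤ ramp q r u := by
  have hpos : 0 < r - q := sub_pos.2 hqr
  refine Set.indicator_apply_le' (fun hu ↦ ?_) fun _ ↦ ?_
  · have hslope : (r - u - (q - u)) / (r - q) = 1 := by
      rw [sub_sub_sub_cancel_right, div_self hpos.ne']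
    rw [Set.mem_Iic] at hu
    rw [ramp, abs_sub_comm u r, abs_sub_comm u q, abs_of_nonneg (by linarith),
      abs_of_nonneg (by linarith), hslope]
    norm_num
  · have hslope : -1 ≤ (|u - r| - |u - q|) / (r - q) := by
      rw [le_div_iff₀ hpos]
      linarith [abs_sub_le u r q, abs_of_pos hpos]
    rw [ramp]
    linarith

lemma ramp_le_indicator_Iic (hqr : q < r) (u : ℝ) : ramp q r u ≤ (Set.Iic r).indicator 1 u := by
  have hpos : 0 < r - q := sub_pos.2 hqr
  refine Set.le_indicator_apply (fun _ ↦ ?_) fun hu ↦ ?_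
  · have hslope : (|u - r| - |u - q|) / (r - q) ≤ 1 := by
      rw [div_le_one hpos]
      linarith [abs_sub_le u q r, abs_sub_comm q r, abs_of_pos hpos]
    rw [ramp, Pi.one_apply]
    linarith
  · have hslope : (u - r - (u - q)) / (r - q) = -1 := by
      rw [sub_sub_sub_cancel_left, ← neg_sub r q, neg_div, div_self hpos.ne']
    rw [Set.mem_Iic, not_le] at hu
    rw [ramp, abs_of_pos (by linarith), abs_of_pos (by linarith), hslope]
    norm_num

lemma integrable_abs_sub_const [IsFiniteMeasure ν] (hν : Integrable (fun u ↦ u) ν) (q : ℝ) :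
    Integrable (fun u ↦ |u - q|) ν :=
  (hν.sub (integrable_const q)).abs

lemma integrable_ramp [IsFiniteMeasure ν] (hν : Integrable (fun u ↦ u) ν) (q r : ℝ) :
    Integrable (ramp q r) ν :=
  ((((integrable_abs_sub_const hν r).sub (integrable_abs_sub_const hν q)).div_const _).add
    (integrable_const 1)).div_const 2

lemma integral_ramp [IsProbabilityMeasure ν] (hν : Integrable (fun u ↦ u) ν) (q r : ℝ) :
    ∫ u, ramp q r u ∂ν = ((∫ u, |u - r| ∂ν - ∫ u, |u - q| ∂ν) / (r - q) + 1) / 2 := by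
  have hdiff : Integrable (fun u ↦ |u - r| - |u - q|) ν :=
    (integrable_abs_sub_const hν r).sub (integrable_abs_sub_const hν q)
  simp only [ramp]
  rw [integral_div, integral_add (hdiff.div_const _) (integrable_const 1), integral_div,
    integral_sub (integrable_abs_sub_const hν r) (integrable_abs_sub_const hν q)]
  simp

lemma cdf_le_integral_ramp [IsProbabilityMeasure ν] (hν : Integrable (fun u ↦ u) ν)
    (hqr : q < r) : cdf ν q ≤ ∫ u, ramp q r u ∂ν := by
  rw [cdf_eq_real, ← integral_indicator_one measurableSet_Iic]
  exact integral_mono ((integrable_const (1 : ℝ)).indicator measurableSet_Iic)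
    (integrable_ramp hν q r) (indicator_Iic_le_ramp hqr)

lemma integral_ramp_le_cdf [IsProbabilityMeasure ν] (hν : Integrable (fun u ↦ u) ν)
    (hqr : q < r) : ∫ u, ramp q r u ∂ν ≤ cdf ν r := by
  rw [cdf_eq_real, ← integral_indicator_one measurableSet_Iic]
  exact integral_mono (integrable_ramp hν q r)
    ((integrable_const (1 : ℝ)).indicator measurableSet_Iic) (ramp_le_indicator_Iic hqr)

end Ramp

section WassersteinConvergence

open ProbabilityTheory

variable {ν : ℕ → Measure ℝ} {G : Measure ℝ} [∀ N, IsProbabilityMeasure (ν N)]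
  [IsProbabilityMeasure G]

lemma tendsto_integral_ramp (hν : ∀ N, Integrable (fun u ↦ u) (ν N))
    (hG : Integrable (fun u ↦ u) G)
    (hpot : ∀ q : ℚ, Tendsto (fun N ↦ ∫ u, |u - q| ∂ν N) atTop (𝓝 (∫ u, |u - q| ∂G))) (q r : ℚ) :
    Tendsto (fun N ↦ ∫ u, ramp q r u ∂ν N) atTop (𝓝 (∫ u, ramp q r u ∂G)) := by
  simp only [integral_ramp (hν _), integral_ramp hG]
  exact ((((hpot r).sub (hpot q)).div_const _).add_const 1).div_const 2

lemma tendsto_quantile {u : ℝ} (hν : ∀ N, Integrable (fun u ↦ u) (ν N))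
    (hG : Integrable (fun u ↦ u) G)
    (hramp : ∀ q r : ℚ,
      Tendsto (fun N ↦ ∫ u, ramp q r u ∂ν N) atTop (𝓝 (∫ u, ramp q r u ∂G)))
    (hu : u ∈ Set.Ioo (0 : ℝ) 1) (hcont : ContinuousWithinAt (quantile G) (Set.Ioo 0 1) u) :
    Tendsto (fun N ↦ quantile (ν N) u) atTop (𝓝 (quantile G u)) := by
  refine tendsto_order.2 ⟨fun a ha ↦ ?_, fun b hb ↦ ?_⟩
  · obtain ⟨r, har, hrG⟩ := exists_rat_btwn ha
    obtain ⟨q, haq, hqr⟩ := exists_rat_btwn har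
    have hlt : ∫ v, ramp q r v ∂G < u :=
      (integral_ramp_le_cdf hG hqr).trans_lt ((lt_quantile_iff hu).1 hrG)
    filter_upwards [(hramp q r).eventually_lt_const hlt] with N hN
    exact haq.trans ((lt_quantile_iff hu).2 ((cdf_le_integral_ramp (hν N) hqr).trans_lt hN))
  · have hnhds : 𝓝[Set.Ioo 0 1] u = 𝓝 u := isOpen_Ioo.nhdsWithin_eq hu
    obtain ⟨v, ⟨hvb, hv⟩, huv⟩ : ∃ v, (quantile G v < b ∧ v ∈ Set.Ioo (0 : ℝ) 1) ∧ u < v := by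
      have hnear : ∀ᶠ v in 𝓝 u, quantile G v < b ∧ v ∈ Set.Ioo (0 : ℝ) 1 :=
        (hnhds ▸ hcont.eventually_lt_const hb).and (isOpen_Ioo.mem_nhds hu)
      exact ((hnear.filter_mono nhdsWithin_le_nhds).and
        (self_mem_nhdsWithin (s := Set.Ioi u))).exists
    obtain ⟨q, hvq, hqb⟩ := exists_rat_btwn hvb
    obtain ⟨r, hqr, hrb⟩ := exists_rat_btwn hqb
    have hlt : u < ∫ v, ramp q r v ∂G :=
      huv.trans_le (((quantile_le_iff hv).1 hvq.le).trans (cdf_le_integral_ramp hG hqr))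
    filter_upwards [(hramp q r).eventually_const_lt hlt] with N hN
    exact ((quantile_le_iff hu).2 (hN.le.trans (integral_ramp_le_cdf (hν N) hqr))).trans_lt hrb

lemma tendsto_W1_of_tendsto_integral_abs_sub (hν : ∀ N, Integrable (fun u ↦ u) (ν N))
    (hG : Integrable (fun u ↦ u) G)
    (hpot : ∀ q : ℚ, Tendsto (fun N ↦ ∫ u, |u - q| ∂ν N) atTop (𝓝 (∫ u, |u - q| ∂G))) :
    Tendsto (fun N ↦ W1 (ν N) G) atTop (𝓝 0) := by
  have hquantile : ∀ᵐ u ∂uniform01, Tendsto (fun N ↦ quantile (ν N) u) atTop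
      (𝓝 (quantile G u)) := by
    filter_upwards [ae_mem_Ioo_uniform01, ae_continuousWithinAt_quantile G] with u hu hcont
    exact tendsto_quantile hν hG (tendsto_integral_ramp hν hG hpot) hu hcont
  have habs : Tendsto (fun N ↦ ∫ u, |quantile (ν N) u| ∂uniform01) atTop
      (𝓝 (∫ u, |quantile G u| ∂uniform01)) := by
    simpa only [integral_comp_quantile continuous_abs, Rat.cast_zero, sub_zero] using hpot 0
  exact squeeze_zero (fun N ↦ W1_nonneg _ _) (fun N ↦ W1_le_integral_quantile _ _)
    (tendsto_integral_abs_sub_of_tendsto_integral_abs (fun N ↦ integrable_quantile (hν N))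
      (integrable_quantile hG) hquantile habs)

end WassersteinConvergence

section SymbolicDynamics

variable {A : Type*} {θ L : ℝ} {f : (ℕ → A) → ℝ}

lemma dtheta_nonneg (hθ : 0 ≤ θ) (x y : ℕ → A) : 0 ≤ dtheta θ x y := by
  unfold dtheta
  split_ifs <;> positivity

lemma dtheta_le_one (hθ : 0 ≤ θ) (hθ1 : θ ≤ 1) (x y : ℕ → A) : dtheta θ x y ≤ 1 := by
  unfold dtheta
  split_ifs
  · exact zero_le_one
  · exact pow_le_one₀ hθ hθ1

lemma exists_abs_le_of_abs_sub_le_dtheta (hθ : 0 ≤ θ) (hθ1 : θ ≤ 1)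
    (hf : ∀ x y, |f x - f y| ≤ L * dtheta θ x y) : ∃ B, ∀ x, |f x| ≤ B := by
  cases isEmpty_or_nonempty (ℕ → A) with
  | inl _ => exact ⟨0, fun x ↦ isEmptyElim x⟩
  | inr h =>
    obtain ⟨y⟩ := h
    refine ⟨|f y| + |L|, fun x ↦ ?_⟩
    have hdiff : |f x - f y| ≤ |L| :=
      calc |f x - f y| ≤ L * dtheta θ x y := hf x y
        _ ≤ |L| * dtheta θ x y := by gcongr; exacts [dtheta_nonneg hθ x y, le_abs_self L]
        _ ≤ |L| := mul_le_of_le_one_right (abs_nonneg L) (dtheta_le_one hθ hθ1 x y)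
    linarith [abs_sub_abs_le_abs_sub (f x) (f y)]

lemma birk_succ (f : (ℕ → A) → ℝ) (n : ℕ) (x : ℕ → A) :
    birk f (n + 1) x = birk f n (shift x) + f x := by
  simp [birk, Finset.sum_range_succ']

/-- The sum of `f` over the first `n` entries of a tuple of `N` points (over all `N` of them if
`N ≤ n`); evaluated along an orbit it is a Birkhoff sum. -/
def prefixSum (f : (ℕ → A) → ℝ) {N : ℕ} (n : ℕ) (X : Fin N → (ℕ → A)) : ℝ :=
  ∑ j with j.val < n, f (X j)

lemma prefixSum_orbit (f : (ℕ → A) → ℝ) {n N : ℕ} (h : n ≤ N) (x : ℕ → A) :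
    prefixSum f n (fun j : Fin N ↦ shift^[(j : ℕ)] x) = birk f n x := by
  rw [prefixSum, birk, Finset.sum_filter,
    Fin.sum_univ_eq_sum_range (fun j ↦ if j < n then f (shift^[j] x) else 0) N,
    ← Finset.sum_filter]
  congr 1
  ext j
  simp only [Finset.mem_filter, Finset.mem_range]
  omega

lemma prefixSum_sub_update (f : (ℕ → A) → ℝ) {N : ℕ} (n : ℕ) (X : Fin N → (ℕ → A)) (i : Fin N)
    (x' : ℕ → A) :
    prefixSum f n X - prefixSum f n (Function.update X i x') =
      if i.val < n then f (X i) - f x' else 0 := by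
  rw [prefixSum, prefixSum, Finset.sum_filter, Finset.sum_filter, ← Finset.sum_sub_distrib,
    Finset.sum_eq_single i]
  · simp only [Function.update_self]
    split_ifs <;> simp
  · intro j _ hj
    simp [Function.update_of_ne hj]
  · simp

lemma sepLip_prefixSum (hf : ∀ x y, |f x - f y| ≤ L * dtheta θ x y) (n : ℕ) :
    SepLip θ (prefixSum f (N := n) n) fun _ ↦ L := fun X i x' ↦ by
  rw [prefixSum_sub_update, if_pos i.2]
  exact hf _ _

lemma abs_comp_prefixSum_sub_update_le {g : ℝ → ℝ} {c : ℝ≥0} (hg : LipschitzWith c g)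
    (hf : ∀ x y, |f x - f y| ≤ L * dtheta θ x y) {N : ℕ} (n : ℕ) (X : Fin N → (ℕ → A)) (i : Fin N)
    (x' : ℕ → A) :
    |g (prefixSum f n X / √n) - g (prefixSum f n (Function.update X i x') / √n)| ≤
      if i.val < n then c * (L * dtheta θ (X i) x') * (√n)⁻¹ else 0 := by
  have hlip := hg.dist_le_mul (prefixSum f n X / √n) (prefixSum f n (Function.update X i x') / √n)
  rw [Real.dist_eq, Real.dist_eq, ← sub_div, prefixSum_sub_update] at hlip
  refine hlip.trans ?_
  split_ifs
  · rw [abs_div, abs_of_nonneg (Real.sqrt_nonneg _), div_eq_mul_inv, ← mul_assoc]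
    gcongr
    exact hf _ _
  · simp

/-- The influence of the `i`-th coordinate of a tuple of `N` points on the logarithmic average of
the functions `g (prefixSum f n · / √n)`, where `a` is a multiple of the product of the Lipschitz
constants of `g` and `f`. -/
def coordInfluence (a : ℝ) (N i : ℕ) : ℝ := a / harmonic N * (√(i + 1 : ℕ))⁻¹

lemma sum_sq_coordInfluence (a : ℝ) {N : ℕ} (hN : N ≠ 0) :
    ∑ i : Fin N, coordInfluence a N i ^ 2 = a ^ 2 / harmonic N := by
  have hpos := cast_harmonic_pos hN
  have hsq : ∀ i : ℕ, coordInfluence a N i ^ 2 = (a / harmonic N) ^ 2 * (↑(i + 1) : ℝ)⁻¹ :=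
    fun i ↦ by rw [coordInfluence, mul_pow, inv_pow, Real.sq_sqrt (Nat.cast_nonneg _)]
  rw [Fin.sum_univ_eq_sum_range (fun i ↦ coordInfluence a N i ^ 2) N]
  simp only [hsq]
  rw [← Finset.mul_sum, ← sum_Icc_one_eq_sum_range fun n : ℕ ↦ (n : ℝ)⁻¹,
    ← cast_harmonic_eq_sum_Icc]
  field_simp

lemma sepLip_logAverage {g : ℝ → ℝ} {c : ℝ≥0} (hg : LipschitzWith c g)
    (hf : ∀ x y, |f x - f y| ≤ L * dtheta θ x y) {N : ℕ} (hN : N ≠ 0) :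
    SepLip θ (fun X : Fin N → (ℕ → A) ↦ logAverage (fun n ↦ g (prefixSum f n X / √n)) N)
      fun i ↦ coordInfluence (4 * c * L) N i := fun X i x' ↦ by
  have hpos := cast_harmonic_pos hN
  have hdist : 0 ≤ L * dtheta θ (X i) x' := (abs_nonneg _).trans (hf _ _)
  have hset : {n ∈ Finset.Icc 1 N | i.val < n} = Finset.Ico (i.val + 1) (N + 1) := by
    ext n
    simp only [Finset.mem_filter, Finset.mem_Icc, Finset.mem_Ico]
    omega
  have hsum : |∑ n ∈ Finset.Icc 1 N, g (prefixSum f n X / √n) / n -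
      ∑ n ∈ Finset.Icc 1 N, g (prefixSum f n (Function.update X i x') / √n) / n| ≤
      c * (L * dtheta θ (X i) x') * (4 * (√(i.val + 1 : ℕ))⁻¹) :=
    calc _ ≤ ∑ n ∈ Finset.Icc 1 N,
          if i.val < n then c * (L * dtheta θ (X i) x') * ((√n)⁻¹ / n) else 0 := by
          rw [← Finset.sum_sub_distrib]
          refine (Finset.abs_sum_le_sum_abs _ _).trans (Finset.sum_le_sum fun n _ ↦ ?_)
          rw [← sub_div, abs_div, Nat.abs_cast]
          refine (div_le_div_of_nonneg_right
            (abs_comp_prefixSum_sub_update_le hg hf n X i x') n.cast_nonneg).trans_eq ?_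
          split_ifs <;> ring
      _ = c * (L * dtheta θ (X i) x') * ∑ n ∈ Finset.Ico (i.val + 1) (N + 1), (√n)⁻¹ / n := by
          rw [← Finset.sum_filter, hset, Finset.mul_sum]
      _ ≤ _ := by
          gcongr
          exact sum_Ico_inv_sqrt_div_le i.2.le
  simp only [logAverage]
  rw [← sub_div, abs_div, abs_of_pos hpos]
  calc _ ≤ c * (L * dtheta θ (X i) x') * (4 * (√(i.val + 1 : ℕ))⁻¹) / harmonic N := by gcongr
    _ = coordInfluence (4 * c * L) N i * dtheta θ (X i) x' := by
        rw [coordInfluence]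
        ring

end SymbolicDynamics

section InvariantMeasure

open ProbabilityTheory BoundedContinuousFunction

variable {A : Type*} [MeasurableSpace A] {μ : Measure (ℕ → A)} {θ C L : ℝ} {f : (ℕ → A) → ℝ}

/-- The variance inequality with constant `C`, for separately `d_θ`-Lipschitz functions of
trajectories. -/
def VarianceInequality (θ C : ℝ) (μ : Measure (ℕ → A)) : Prop :=
  ∀ n : ℕ, 1 ≤ n → ∀ (K : (Fin n → (ℕ → A)) → ℝ) (ℓ : Fin n → ℝ), SepLip θ K ℓ →
    ∫ x, (K (fun i ↦ shift^[(i : ℕ)] x) - ∫ y, K (fun i ↦ shift^[(i : ℕ)] y) ∂μ) ^ 2 ∂μ ≤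
      C * ∑ i, ℓ i ^ 2

lemma aemeasurable_of_tendsto_integral_birk {G : Measure ℝ} [IsProbabilityMeasure G]
    (hinv : MeasurePreserving shift μ μ)
    (hlaw : ∀ φ : ℝ →ᵇ ℝ,
      Tendsto (fun n : ℕ ↦ ∫ x, φ (birk f n x / √n) ∂μ) atTop (𝓝 (∫ u, φ u ∂G))) :
    AEMeasurable f μ := by
  have hbirk : ∀ᶠ n in atTop, AEMeasurable (birk f n) μ := by
    filter_upwards [eventually_aemeasurable_of_tendsto_integral hlaw, eventually_gt_atTop 0]
      with n hn hpos
    have hsqrt : √(n : ℝ) ≠ 0 := by positivity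
    simpa [div_mul_cancel₀ _ hsqrt] using hn.mul_const √n
  obtain ⟨n, hn, hsucc⟩ := (hbirk.and ((tendsto_add_atTop_nat 1).eventually hbirk)).exists
  have hshift : AEMeasurable (fun x ↦ birk f n (shift x)) μ :=
    hn.comp_quasiMeasurePreserving hinv.quasiMeasurePreserving
  exact (hsucc.sub hshift).congr (.of_forall fun x ↦ by simp [birk_succ])

lemma memLp_birk {p : ℝ≥0∞} (hinv : MeasurePreserving shift μ μ) (hf : MemLp f p μ) (n : ℕ) :
    MemLp (birk f n) p μ :=
  memLp_finsetSum _ fun i _ ↦ hf.comp_measurePreserving (hinv.iterate i)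

lemma integral_birk (hinv : MeasurePreserving shift μ μ) (hf : Integrable f μ) (n : ℕ) :
    ∫ x, birk f n x ∂μ = n * ∫ x, f x ∂μ := by
  have hiterate : ∀ i, ∫ x, f (shift^[i] x) ∂μ = ∫ x, f x ∂μ := fun i ↦ by
    have hi := hinv.iterate i
    have hmap := hf.aestronglyMeasurable
    rw [← hi.map_eq] at hmap
    rw [← integral_map hi.aemeasurable hmap, hi.map_eq]
  simp only [birk]
  rw [integral_finsetSum (f := fun i x ↦ f (shift^[i] x)) _ fun i _ ↦
    (hinv.iterate i).integrable_comp_of_integrable hf]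
  simp [hiterate]

lemma VarianceInequality.variance_le (hvar : VarianceInequality θ C μ) {n : ℕ} (hn : 1 ≤ n)
    {K : (Fin n → (ℕ → A)) → ℝ} {ℓ : Fin n → ℝ} (hK : SepLip θ K ℓ)
    (hmeas : AEMeasurable (fun x ↦ K fun i ↦ shift^[(i : ℕ)] x) μ) :
    Var[fun x ↦ K fun i ↦ shift^[(i : ℕ)] x; μ] ≤ C * ∑ i, ℓ i ^ 2 := by
  rw [variance_eq_integral hmeas]
  exact hvar n hn K ℓ hK

lemma VarianceInequality.variance_birk_le (hvar : VarianceInequality θ C μ)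
    (hf : ∀ x y, |f x - f y| ≤ L * dtheta θ x y) {n : ℕ} (hn : 1 ≤ n)
    (hmeas : AEMeasurable (birk f n) μ) : Var[birk f n; μ] ≤ n * (C * L ^ 2) := by
  have hle := hvar.variance_le hn (sepLip_prefixSum hf n)
    (by simpa only [prefixSum_orbit f le_rfl] using hmeas)
  simp only [prefixSum_orbit f le_rfl, Finset.sum_const, Finset.card_univ, Fintype.card_fin,
    nsmul_eq_mul] at hle
  linarith

lemma VarianceInequality.integral_sq_birk_div_sqrt_le (hvar : VarianceInequality θ C μ)
    (hinv : MeasurePreserving shift μ μ) (hf : ∀ x y, |f x - f y| ≤ L * dtheta θ x y)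
    (hint : Integrable f μ) (hf0 : ∫ x, f x ∂μ = 0) {n : ℕ} (hn : 1 ≤ n) :
    ∫ x, (birk f n x / √n) ^ 2 ∂μ ≤ C * L ^ 2 := by
  have hmeas : AEMeasurable (birk f n) μ :=
    (memLp_birk hinv (memLp_one_iff_integrable.2 hint) n).aemeasurable
  have hmean : ∫ x, birk f n x ∂μ = 0 := by rw [integral_birk hinv hint, hf0, mul_zero]
  have hle := hvar.variance_birk_le hf hn hmeas
  rw [variance_of_integral_eq_zero hmeas hmean] at hle
  simp only [div_pow, Real.sq_sqrt (Nat.cast_nonneg n)]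
  rwa [integral_div, div_le_iff₀' (by positivity)]

lemma VarianceInequality.ae_tendsto_logAverage_birk [IsFiniteMeasure μ]
    (hvar : VarianceInequality θ C μ) (hf : ∀ x y, |f x - f y| ≤ L * dtheta θ x y)
    {g : ℝ → ℝ} {c : ℝ≥0} (hg : LipschitzWith c g) (hg_nonneg : ∀ u, 0 ≤ g u)
    (hX : ∀ n : ℕ, MemLp (fun x ↦ g (birk f n x / √n)) 2 μ) {m : ℝ}
    (hmean : Tendsto (fun n : ℕ ↦ ∫ x, g (birk f n x / √n) ∂μ) atTop (𝓝 m)) :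
    ∀ᵐ x ∂μ, Tendsto (logAverage fun n ↦ g (birk f n x / √n)) atTop (𝓝 m) := by
  refine ae_tendsto_logAverage (K := C * (4 * c * L) ^ 2) hX (fun n x ↦ hg_nonneg _)
    (fun N hN ↦ ?_) hmean
  have horbit : ∀ x : ℕ → A, logAverage (fun n ↦
      g (prefixSum f n (fun j : Fin N ↦ shift^[(j : ℕ)] x) / √n)) N =
      logAverage (fun n ↦ g (birk f n x / √n)) N := fun x ↦ by
    simp only [logAverage]
    congr 1
    refine Finset.sum_congr rfl fun n hn ↦ ?_
    rw [prefixSum_orbit f (Finset.mem_Icc.1 hn).2]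
  have hle := hvar.variance_le hN (sepLip_logAverage hg hf (by omega))
    (by simpa only [horbit] using (memLp_logAverage hX N).aemeasurable)
  simpa only [horbit, sum_sq_coordInfluence _ (by omega : N ≠ 0), mul_div_assoc] using hle

end InvariantMeasure

section EmpiricalMeasure

variable {A : Type*} {N : ℕ}

lemma ofReal_sum_one_div_ne_zero (hN : N ≠ 0) :
    ENNReal.ofReal (∑ n ∈ Finset.Icc 1 N, (1 : ℝ) / n) ≠ 0 := by
  simpa [cast_harmonic_eq_sum_Icc] using cast_harmonic_pos hN

lemma isProbabilityMeasure_ANmeas (f : (ℕ → A) → ℝ) (x : ℕ → A) (hN : N ≠ 0) :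
    IsProbabilityMeasure (ANmeas f x N) := by
  constructor
  simp only [ANmeas, Measure.smul_apply, Measure.finsetSum_apply, measure_univ, smul_eq_mul,
    mul_one]
  rw [← ENNReal.ofReal_sum_of_nonneg fun n _ ↦ by positivity]
  exact ENNReal.inv_mul_cancel (ofReal_sum_one_div_ne_zero hN) ENNReal.ofReal_ne_top

lemma integrable_ANmeas (f : (ℕ → A) → ℝ) (x : ℕ → A) (hN : N ≠ 0) (g : ℝ → ℝ) :
    Integrable g (ANmeas f x N) := by
  refine Integrable.smul_measure (integrable_finsetSum_measure.2 fun n _ ↦ ?_)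
    (ENNReal.inv_ne_top.2 (ofReal_sum_one_div_ne_zero hN))
  exact (integrable_dirac (by simp)).smul_measure ENNReal.ofReal_ne_top

lemma integral_ANmeas (f : (ℕ → A) → ℝ) (x : ℕ → A) (N : ℕ) (g : ℝ → ℝ) :
    ∫ u, g u ∂ANmeas f x N = logAverage (fun n ↦ g (birk f n x / √n)) N := by
  have hharmonic : (0 : ℝ) ≤ harmonic N := by
    rw [cast_harmonic_eq_sum_Icc]
    positivity
  have hsum : ∑ n ∈ Finset.Icc 1 N, (1 : ℝ) / n = harmonic N := by
    simp [cast_harmonic_eq_sum_Icc]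
  rw [ANmeas, integral_smul_measure, integral_finsetSum_measure
    fun n _ ↦ (integrable_dirac (by simp)).smul_measure ENNReal.ofReal_ne_top, hsum,
    ENNReal.toReal_inv, ENNReal.toReal_ofReal hharmonic, smul_eq_mul, inv_mul_eq_div, logAverage]
  congr 1
  refine Finset.sum_congr rfl fun n _ ↦ ?_
  rw [integral_smul_measure, integral_dirac, ENNReal.toReal_ofReal (by positivity), smul_eq_mul,
    one_div_mul_eq_div]

lemma tendsto_W1_ANmeas {f : (ℕ → A) → ℝ} {x : ℕ → A} {G : Measure ℝ} [IsProbabilityMeasure G]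
    (hG : Integrable (fun u ↦ u) G)
    (hpot : ∀ q : ℚ, Tendsto (logAverage fun n ↦ |birk f n x / √n - q|) atTop
      (𝓝 (∫ u, |u - q| ∂G))) :
    Tendsto (fun N ↦ W1 (ANmeas f x N) G) atTop (𝓝 0) := by
  have hprob : ∀ N, IsProbabilityMeasure (ANmeas f x (N + 1)) := fun N ↦
    isProbabilityMeasure_ANmeas f x N.succ_ne_zero
  rw [← tendsto_add_atTop_iff_nat 1]
  refine tendsto_W1_of_tendsto_integral_abs_sub (fun N ↦ integrable_ANmeas f x N.succ_ne_zero _) hG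
    fun q ↦ ?_
  simpa only [integral_ANmeas] using (tendsto_add_atTop_iff_nat 1).2 (hpot q)

end EmpiricalMeasure

section CentralLimit

open BoundedContinuousFunction

variable {A : Type*} [MeasurableSpace A] {μ : Measure (ℕ → A)} {θ C L : ℝ} {f : (ℕ → A) → ℝ}
  {G : Measure ℝ}

lemma memLp_birk_div_sqrt_sub [IsFiniteMeasure μ] {p : ℝ≥0∞} (hinv : MeasurePreserving shift μ μ)
    (hf : MemLp f p μ) (q : ℝ) (n : ℕ) : MemLp (fun x ↦ birk f n x / √n - q) p μ := by
  simp only [div_eq_inv_mul]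
  exact ((memLp_birk hinv hf n).const_mul _).sub (memLp_const q)

lemma integral_sq_sub_const_le {Ω : Type*} [MeasurableSpace Ω] {P : Measure Ω}
    [IsProbabilityMeasure P] {Y : Ω → ℝ} (hY : MemLp Y 2 P) (q : ℝ) :
    ∫ ω, (Y ω - q) ^ 2 ∂P ≤ 2 * (∫ ω, Y ω ^ 2 ∂P + q ^ 2) := by
  have hsq : Integrable (fun ω ↦ Y ω ^ 2 + q ^ 2) P := hY.integrable_sq.add (integrable_const _)
  calc ∫ ω, (Y ω - q) ^ 2 ∂P
      ≤ ∫ ω, 2 * (Y ω ^ 2 + q ^ 2) ∂P :=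
        integral_mono (hY.sub (memLp_const q)).integrable_sq (hsq.const_mul 2) fun ω ↦ by
          simpa [sub_eq_add_neg] using add_sq_le (a := Y ω) (b := -q)
    _ = 2 * (∫ ω, Y ω ^ 2 ∂P + q ^ 2) := by
        rw [integral_const_mul, integral_add hY.integrable_sq (integrable_const _)]
        simp

lemma VarianceInequality.eventually_integral_sq_abs_sub_le [IsProbabilityMeasure μ]
    (hvar : VarianceInequality θ C μ) (hinv : MeasurePreserving shift μ μ)
    (hf : ∀ x y, |f x - f y| ≤ L * dtheta θ x y) (hmem : MemLp f 2 μ) (hf0 : ∫ x, f x ∂μ = 0)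
    (q : ℝ) :
    ∀ᶠ n : ℕ in atTop, ∫ x, |birk f n x / √n - q| ^ 2 ∂μ ≤ 2 * (C * L ^ 2 + q ^ 2) := by
  filter_upwards [eventually_ge_atTop 1] with n hn
  have hmoment := hvar.integral_sq_birk_div_sqrt_le hinv hf (hmem.integrable one_le_two) hf0 hn
  have hmem_div : MemLp (fun x ↦ birk f n x / √n) 2 μ := by
    simpa using memLp_birk_div_sqrt_sub hinv hmem 0 n
  simp only [sq_abs]
  exact (integral_sq_sub_const_le hmem_div q).trans (by gcongr)

lemma VarianceInequality.integrable_id [IsProbabilityMeasure μ] [IsFiniteMeasure G]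
    (hvar : VarianceInequality θ C μ) (hinv : MeasurePreserving shift μ μ)
    (hf : ∀ x y, |f x - f y| ≤ L * dtheta θ x y) (hmem : MemLp f 2 μ) (hf0 : ∫ x, f x ∂μ = 0)
    (hlaw : ∀ φ : ℝ →ᵇ ℝ,
      Tendsto (fun n : ℕ ↦ ∫ x, φ (birk f n x / √n) ∂μ) atTop (𝓝 (∫ u, φ u ∂G))) :
    Integrable (fun u ↦ u) G := by
  have habs : Integrable (fun u ↦ |u - 0|) G :=
    integrable_of_tendsto_integral_of_integral_sq_le hlaw
      (continuous_id.sub continuous_const).abs (fun u ↦ abs_nonneg _)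
      (fun n ↦ (memLp_birk_div_sqrt_sub hinv hmem 0 n).abs)
      (hvar.eventually_integral_sq_abs_sub_le hinv hf hmem hf0 0)
  simp only [sub_zero] at habs
  exact (integrable_norm_iff aestronglyMeasurable_id).1 habs

lemma VarianceInequality.ae_tendsto_logAverage_abs_sub [IsProbabilityMeasure μ]
    [IsFiniteMeasure G] (hvar : VarianceInequality θ C μ)
    (hinv : MeasurePreserving shift μ μ) (hf : ∀ x y, |f x - f y| ≤ L * dtheta θ x y)
    (hmem : MemLp f 2 μ) (hf0 : ∫ x, f x ∂μ = 0)
    (hlaw : ∀ φ : ℝ →ᵇ ℝ,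
      Tendsto (fun n : ℕ ↦ ∫ x, φ (birk f n x / √n) ∂μ) atTop (𝓝 (∫ u, φ u ∂G))) (q : ℝ) :
    ∀ᵐ x ∂μ, Tendsto (logAverage fun n ↦ |birk f n x / √n - q|) atTop
      (𝓝 (∫ u, |u - q| ∂G)) := by
  have hlip : LipschitzWith 1 fun u : ℝ ↦ |u - q| := .mk_one fun u v ↦ by
    simpa [Real.dist_eq] using abs_abs_sub_abs_le (u - q) (v - q)
  have hX : ∀ n : ℕ, MemLp (fun x ↦ |birk f n x / √n - q|) 2 μ := fun n ↦
    (memLp_birk_div_sqrt_sub hinv hmem q n).abs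
  exact hvar.ae_tendsto_logAverage_birk hf hlip (fun u ↦ abs_nonneg _) hX <|
    tendsto_integral_comp_of_integral_sq_le hlaw hlip.continuous (fun u ↦ abs_nonneg _) hX
      (hvar.eventually_integral_sq_abs_sub_le hinv hf hmem hf0 q)

theorem stmt19_general (hθ : 0 ≤ θ) (hθ1 : θ ≤ 1) [IsProbabilityMeasure μ]
    [IsProbabilityMeasure G] (hinv : MeasurePreserving shift μ μ)
    (hvar : VarianceInequality θ C μ) (hf : ∀ x y, |f x - f y| ≤ L * dtheta θ x y)
    (hf0 : ∫ x, f x ∂μ = 0)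
    (hlaw : ∀ φ : ℝ →ᵇ ℝ,
      Tendsto (fun n : ℕ ↦ ∫ x, φ (birk f n x / √n) ∂μ) atTop (𝓝 (∫ u, φ u ∂G))) :
    ∀ᵐ x ∂μ, Tendsto (fun N ↦ W1 (ANmeas f x N) G) atTop (𝓝 0) := by
  obtain ⟨B, hB⟩ := exists_abs_le_of_abs_sub_le_dtheta hθ hθ1 hf
  have hmeas : AEMeasurable f μ := aemeasurable_of_tendsto_integral_birk hinv hlaw
  have hmem : MemLp f 2 μ := .of_bound hmeas.aestronglyMeasurable B (.of_forall hB)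
  have hG : Integrable (fun u ↦ u) G := hvar.integrable_id hinv hf hmem hf0 hlaw
  filter_upwards [ae_all_iff.2 fun q : ℚ ↦
    hvar.ae_tendsto_logAverage_abs_sub hinv hf hmem hf0 hlaw q] with x hx
  exact tendsto_W1_ANmeas hG hx

end CentralLimit

/-- almost-sure central limit theorem from the variance inequality. -/
theorem stmt19 {A : Type*} [MeasurableSpace A]
    (θ : ℝ) (hθ0 : 0 < θ) (hθ1 : θ < 1)
    (μ : Measure (ℕ → A)) [IsProbabilityMeasure μ]
    (hinv : MeasurePreserving shift μ μ)
    (C : ℝ) (hC : 0 < C)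
    (hvar : ∀ (n : ℕ), 1 ≤ n → ∀ (K : (Fin n → (ℕ → A)) → ℝ) (ℓ : Fin n → ℝ),
      SepLip θ K ℓ →
      ∫ x, (K (fun i => shift^[(i : ℕ)] x) - ∫ y, K (fun i => shift^[(i : ℕ)] y) ∂μ) ^ 2 ∂μ ≤
        C * ∑ i, ℓ i ^ 2)
    (f : (ℕ → A) → ℝ) (L : ℝ) (hf : ∀ x y, |f x - f y| ≤ L * dtheta θ x y)
    (hf0 : ∫ x, f x ∂μ = 0)
    (hsum : Summable fun l : ℕ => ∫ x, f x * f (shift^[l + 1] x) ∂μ)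
    (σ2 : ℝ)
    (hσ2 : σ2 = ∫ x, f x ^ 2 ∂μ + 2 * ∑' l : ℕ, ∫ x, f x * f (shift^[l + 1] x) ∂μ)
    (hσ2pos : 0 < σ2)
    (hclt : ∀ gB : BoundedContinuousFunction ℝ ℝ,
      Tendsto (fun n : ℕ => ∫ x, gB (birk f n x / Real.sqrt n) ∂μ) atTop
        (𝓝 (∫ u, gB u ∂(ProbabilityTheory.gaussianReal 0 σ2.toNNReal)))) :
    ∀ᵐ x ∂μ, Tendsto
      (fun N => W1 (ANmeas f x N) (ProbabilityTheory.gaussianReal 0 σ2.toNNReal))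
      atTop (𝓝 0) :=
  stmt19_general hθ0.le hθ1.le hinv hvar hf hf0 hclt
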